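/- (Composition with a linear map.) Let m ∈ C_b(ℝ^{2n}) be a bilinear multiplier from L^{p₁}(ℝⁿ)×L^{p₂}(ℝⁿ) to L^p(ℝⁿ), and let A: ℝ^d → ℝⁿ be any linear map. Then m̃(ξ,η) := m(Aξ, Aη) is a bilinear multiplier from L^{p₁}(ℝ^d)×L^{p₂}(ℝ^d) to L^p(ℝ^d) with ‖m̃‖_{BM(ℝ^d)} ≤ 𝔠·‖m‖_{BM(ℝⁿ)}, with the constant independent of A. -/

import Mathlib

/-!
The inequality holds already with constant `1`, and `1 ≤ 𝔠` because `B_q ≥ 1 ≥ A_q > 0` for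
the Khintchine constants: test them on a single Rademacher function, and use Khintchine's
inequality to know that the supremum and the infimum defining them are genuine (`one_le_cc`).

For constant `1` the bound is transferred from `ℝⁿ` to `ℝ^d`. Given `f`, `g` on `ℝ^d` and
`x : ℝ^d`, lift them to the functions
`y ↦ e^{-(π/p₁)|εy|²} f(x + Aᵀy)` and `y ↦ e^{-(π/p₂)|εy|²} g(x + Aᵀy)` on `ℝⁿ` (`liftFn`).
The lift turns a frequency `ξ` into a small Gaussian bump around `Aξ`, so the operator of `m`,
applied to the two lifts, equals `H_ε(x + Aᵀy, εy)` for an explicit kernel integral `H_ε`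
(`tker`, `rBm_lift`), which is continuous in `ε`, and
`H_0(w, z) = (B_{m̃}(f, g))(w) · e^{-(π/p)|z|²}` since `1/p₁ + 1/p₂ = 1/p` (`tker_zero`).

Apply the bound for `m` to the lifts for each `x`, raise to the power `p` and integrate in `x`,
using Hölder's inequality on the right. The change of variables `(w, z) = (x + Aᵀy, εy)` has
Jacobian `εⁿ`, independent of `A` (`lintegral_shear`), and the chosen Gaussians are normalized
in `L^{p₁}` and `L^{p₂}`, so the result is `‖H_ε‖_{L^p(ℝ^d × ℝⁿ)} ≤ C ‖f‖_{p₁} ‖g‖_{p₂}`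
(`lintegral_tker_le`). Fatou's lemma as `ε → 0` gives the claim, because `e^{-(π/p)|z|²}` is
normalized in `L^p` (`eLpNorm_rBm_comp_le`). No step requires `p ≥ 1`.
-/

open MeasureTheory Filter Topology
open scoped ENNReal
noncomputable section

/-- The character `e^{2πi ξ·x}` on `ℝ^ι`. -/
noncomputable def rch {ι : Type} [Fintype ι] (ξ x : ι → ℝ) : ℂ :=
  Complex.exp (2 * Real.pi * Complex.I * ((∑ i, ξ i * x i : ℝ) : ℂ))

/-- The Fourier transform on `ℝ^ι`. -/
noncomputable def rft {ι : Type} [Fintype ι] (f : (ι → ℝ) → ℂ) (ξ : ι → ℝ) : ℂ :=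
  ∫ x : ι → ℝ, (starRingEnd ℂ) (rch ξ x) * f x

/-- The bilinear multiplier operator on `ℝ^ι`. -/
noncomputable def rBm {ι : Type} [Fintype ι] (m : (ι → ℝ) → (ι → ℝ) → ℂ)
    (f g : (ι → ℝ) → ℂ) (x : ι → ℝ) : ℂ :=
  ∫ ξ : ι → ℝ, ∫ η : ι → ℝ, rft f ξ * rft g η * m ξ η * rch (ξ + η) x

/-- `f ∈ SL¹(ℝ^ι)`. -/
def rSL1 {ι : Type} [Fintype ι] (f : (ι → ℝ) → ℂ) : Prop :=
  Integrable f ∧ Integrable (rft f)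

/-- The `(L^{p₁}, L^{p₂}, L^p)` bilinear multiplier norm on `ℝ^ι`. -/
noncomputable def rBMnorm (ι : Type) [Fintype ι] (p₁ p₂ p : ℝ)
    (m : (ι → ℝ) → (ι → ℝ) → ℂ) : ℝ≥0∞ :=
  sInf {C | ∀ f g : (ι → ℝ) → ℂ, rSL1 f → rSL1 g →
    eLpNorm (rBm m f g) (ENNReal.ofReal p) volume ≤
      C * eLpNorm f (ENNReal.ofReal p₁) volume * eLpNorm g (ENNReal.ofReal p₂) volume}
/-- The Rademacher system on `[0,1]`. -/
noncomputable def rademacher (j : ℕ) (t : ℝ) : ℝ := (-1 : ℝ) ^ (⌊t * 2 ^ (j + 1)⌋ : ℤ)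

/-- The best constant `A_q` in Khintchine's inequality
`A_q (∑ |α_j|²)^{1/2} ≤ ‖∑ α_j r_j‖_{L^q[0,1]}`. -/
noncomputable def khintchineA (q : ℝ) : ℝ :=
  sSup {A : ℝ | 0 ≤ A ∧ ∀ (N : ℕ) (α : Fin N → ℝ),
    A * (∑ j, α j ^ 2) ^ (1/2 : ℝ) ≤
      (∫ t in (0:ℝ)..1, |∑ j, α j * rademacher j t| ^ q) ^ (1/q)}

/-- The best constant `B_q` in Khintchine's inequality
`‖∑ α_j r_j‖_{L^q[0,1]} ≤ B_q (∑ |α_j|²)^{1/2}`. -/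
noncomputable def khintchineB (q : ℝ) : ℝ :=
  sInf {B : ℝ | 0 ≤ B ∧ ∀ (N : ℕ) (α : Fin N → ℝ),
    (∫ t in (0:ℝ)..1, |∑ j, α j * rademacher j t| ^ q) ^ (1/q) ≤
      B * (∑ j, α j ^ 2) ^ (1/2 : ℝ)}

/-- The constant `𝔠 = B_{p₁}B_{p₂}/A_p²` if `p < 1`, and `𝔠 = 1` otherwise. -/
noncomputable def cc (p p₁ p₂ : ℝ) : ℝ :=
  if p < 1 then khintchineB p₁ * khintchineB p₂ / (khintchineA p) ^ 2 else 1

/-! ### The Khintchine constants -/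

lemma rad_abs (j : ℕ) (t : ℝ) : |rademacher j t| = 1 := by
  simp [rademacher]

lemma rad_sq (j : ℕ) (t : ℝ) : rademacher j t ^ 2 = 1 := by
  rw [← sq_abs, rad_abs]; norm_num

lemma rad_meas (j : ℕ) : Measurable (rademacher j) := by
  have h : Measurable fun k : ℤ => ((-1 : ℝ)) ^ k := measurable_of_countable _
  exact h.comp (Int.measurable_floor.comp (measurable_id.mul_const _))

lemma rad_succ (j : ℕ) (t : ℝ) : rademacher (j + 1) t = rademacher j (2 * t) := by
  unfold rademacher
  congr 2
  ring

lemma rad_add_one (j : ℕ) (t : ℝ) : rademacher j (t + 1) = rademacher j t := by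
  unfold rademacher
  have : (t + 1) * 2 ^ (j + 1) = t * 2 ^ (j + 1) + ((2 ^ (j + 1) : ℤ) : ℝ) := by
    push_cast; ring
  rw [this, Int.floor_add_intCast, zpow_add₀ (by norm_num)]
  have : (-1 : ℝ) ^ (2 ^ (j + 1) : ℤ) = 1 :=
    Even.neg_one_zpow ⟨2 ^ j, by ring⟩
  rw [this, mul_one]

lemma rad_zero_left {t : ℝ} (h0 : 0 ≤ t) (h1 : t < 1 / 2) : rademacher 0 t = 1 := by
  have : ⌊t * 2 ^ (0 + 1)⌋ = 0 := by
    rw [Int.floor_eq_iff]; constructor <;> norm_num <;> linarith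
  simp only [rademacher, this, zpow_zero]

lemma rad_zero_right {t : ℝ} (h0 : 1 / 2 ≤ t) (h1 : t < 1) : rademacher 0 t = -1 := by
  have : ⌊t * 2 ^ (0 + 1)⌋ = 1 := by
    rw [Int.floor_eq_iff]; constructor <;> norm_num <;> linarith
  simp only [rademacher, this, zpow_one]

/-- The Rademacher sum `∑ α_j r_j`. -/
def radSum {N : ℕ} (α : Fin N → ℝ) (t : ℝ) : ℝ := ∑ j, α j * rademacher j t

lemma radSum_meas {N : ℕ} (α : Fin N → ℝ) : Measurable (radSum α) :=
  Finset.measurable_sum _ fun j _ => (rad_meas j).const_mul _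

lemma radSum_bound {N : ℕ} (α : Fin N → ℝ) (t : ℝ) : |radSum α t| ≤ ∑ j, |α j| := by
  refine (Finset.abs_sum_le_sum_abs _ _).trans_eq ?_
  simp [abs_mul, rad_abs]

/-- A continuous function of a Rademacher sum is bounded and measurable, hence integrable. -/
lemma radSum_ii {N : ℕ} (α : Fin N → ℝ) {Φ : ℝ → ℝ} (hΦ : Continuous Φ) (a b : ℝ) :
    IntervalIntegrable (fun t => Φ (radSum α t)) volume a b := by
  obtain ⟨C, hC⟩ := (isCompact_Icc (a := -∑ j, |α j|) (b := ∑ j, |α j|)).exists_bound_of_continuousOn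
    hΦ.continuousOn
  refine (intervalIntegrable_const (c := C)).mono_fun
    ((hΦ.measurable.comp (radSum_meas α)).aestronglyMeasurable) (ae_of_all _ fun t => ?_)
  have := abs_le.1 (radSum_bound α t)
  exact (hC _ ⟨this.1, this.2⟩).trans (le_abs_self C)

lemma radSum_succ {N : ℕ} (α : Fin (N + 1) → ℝ) (t : ℝ) :
    radSum α t = α 0 * rademacher 0 t + radSum (fun j => α j.succ) (2 * t) := by
  simp [radSum, Fin.sum_univ_succ, rad_succ]

lemma radSum_add_one {N : ℕ} (α : Fin N → ℝ) (t : ℝ) : radSum α (t + 1) = radSum α t := by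
  simp [radSum, rad_add_one]

/-- Independence of `r_0` from the remaining Rademacher functions: the integral over `[0,1]`
averages over the sign of `r_0`. -/
lemma radSum_integral_succ {N : ℕ} (α : Fin (N + 1) → ℝ) {Φ : ℝ → ℝ} (hΦ : Continuous Φ) :
    ∫ t in (0:ℝ)..1, Φ (radSum α t) =
      ((∫ t in (0:ℝ)..1, Φ (α 0 + radSum (fun j => α j.succ) t)) +
        ∫ t in (0:ℝ)..1, Φ (-α 0 + radSum (fun j => α j.succ) t)) / 2 := by
  rw [← intervalIntegral.integral_add_adjacent_intervals (b := 1 / 2) (radSum_ii α hΦ _ _)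
    (radSum_ii α hΦ _ _)]
  have e1 : ∫ t in (0:ℝ)..1/2, Φ (radSum α t) =
      ∫ t in (0:ℝ)..1/2, Φ (α 0 + radSum (fun j => α j.succ) (2 * t)) := by
    refine intervalIntegral.integral_congr_ae ?_
    filter_upwards [(measure_eq_zero_iff_ae_notMem (μ := volume) (s := {(1/2 : ℝ)})).1 (by simp)] with t ht h
    rw [Set.uIoc_of_le (by norm_num)] at h
    rw [radSum_succ, rad_zero_left h.1.le (lt_of_le_of_ne h.2 ht), mul_one]
  have e2 : ∫ t in (1/2:ℝ)..1, Φ (radSum α t) =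
      ∫ t in (1/2:ℝ)..1, Φ (-α 0 + radSum (fun j => α j.succ) (2 * t)) := by
    refine intervalIntegral.integral_congr_ae ?_
    filter_upwards [(measure_eq_zero_iff_ae_notMem (μ := volume) (s := {(1 : ℝ)})).1 (by simp)] with t ht h
    rw [Set.uIoc_of_le (by norm_num)] at h
    rw [radSum_succ, rad_zero_right h.1.le (lt_of_le_of_ne h.2 ht), mul_neg_one]
  rw [e1, e2,
    intervalIntegral.integral_comp_mul_left
      (fun t => Φ (α 0 + radSum (fun j => α j.succ) t)) (two_ne_zero' ℝ),
    intervalIntegral.integral_comp_mul_left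
      (fun t => Φ (-α 0 + radSum (fun j => α j.succ) t)) (two_ne_zero' ℝ)]
  have e3 : ∫ t in (1:ℝ)..2, Φ (-α 0 + radSum (fun j => α j.succ) t) =
      ∫ t in (0:ℝ)..1, Φ (-α 0 + radSum (fun j => α j.succ) t) := by
    have := intervalIntegral.integral_comp_add_right (a := 0) (b := 1)
      (fun t => Φ (-α 0 + radSum (fun j => α j.succ) t)) 1
    simp only [radSum_add_one] at this
    rw [this]; norm_num
  norm_num [e3]
  ring

lemma radSum_sq {N : ℕ} (α : Fin N → ℝ) :
    ∫ t in (0:ℝ)..1, radSum α t ^ 2 = ∑ j, α j ^ 2 := by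
  induction N with
  | zero => simp [radSum]
  | succ N ih =>
    rw [radSum_integral_succ α (Φ := fun x => x ^ 2) (by fun_prop), Fin.sum_univ_succ, ← ih]
    rw [← intervalIntegral.integral_add (radSum_ii _ (Φ := fun x => (α 0 + x) ^ 2) (by fun_prop) _ _)
      (radSum_ii _ (Φ := fun x => (-α 0 + x) ^ 2) (by fun_prop) _ _)]
    have : ∀ x : ℝ, (α 0 + x) ^ 2 + (-α 0 + x) ^ 2 = 2 * α 0 ^ 2 + 2 * x ^ 2 := by intro x; ring
    simp_rw [this]
    rw [intervalIntegral.integral_add (by simp)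
      (radSum_ii _ (Φ := fun x => 2 * x ^ 2) (by fun_prop) _ _)]
    simp only [intervalIntegral.integral_const, intervalIntegral.integral_const_mul]
    norm_num
    ring

/-- Sub-Gaussian bound for Rademacher sums. -/
lemma radSum_exp {N : ℕ} (α : Fin N → ℝ) :
    ∫ t in (0:ℝ)..1, Real.exp (radSum α t) ≤ Real.exp ((∑ j, α j ^ 2) / 2) := by
  induction N with
  | zero => simp [radSum]
  | succ N ih =>
    rw [radSum_integral_succ α (Φ := Real.exp) (by fun_prop), Fin.sum_univ_succ]
    simp only [Real.exp_add, intervalIntegral.integral_const_mul]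
    rw [← add_mul, add_div, Real.exp_add, mul_div_right_comm, ← Real.cosh_eq]
    exact mul_le_mul (Real.cosh_le_exp_half_sq _) (ih _)
      (intervalIntegral.integral_nonneg (by norm_num) fun _ _ => (Real.exp_pos _).le)
      (Real.exp_pos _).le

/-- For `q ≥ 0`, `|x|^q` is dominated by a multiple of `e^x + e^{-x}`. -/
lemma rpow_le_cosh {q : ℝ} (hq : 0 ≤ q) : ∃ K : ℝ, 0 < K ∧ ∀ x : ℝ,
    |x| ^ q ≤ K * (Real.exp x + Real.exp (-x)) := by
  obtain ⟨k, hk⟩ := exists_nat_ge q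
  refine ⟨k.factorial + 1, by positivity, fun x => ?_⟩
  have h1 : 1 ≤ Real.exp |x| := Real.one_le_exp (abs_nonneg x)
  have hx : Real.exp |x| ≤ Real.exp x + Real.exp (-x) := by
    rcases abs_cases x with h | h <;> rw [h.1] <;> linarith [Real.exp_pos x, Real.exp_pos (-x)]
  have h2 : |x| ^ q ≤ 1 + |x| ^ k := by
    rcases le_total |x| 1 with h | h
    · have := Real.rpow_le_one (abs_nonneg x) h hq
      have := pow_nonneg (abs_nonneg x) k
      linarith
    · have := Real.rpow_le_rpow_of_exponent_le h hk
      rw [Real.rpow_natCast] at this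
      linarith
  have h3 : |x| ^ k ≤ k.factorial * Real.exp |x| := by
    have := Real.pow_div_factorial_le_exp |x| (abs_nonneg x) k
    rwa [div_le_iff₀' (by positivity)] at this
  calc |x| ^ q ≤ (k.factorial + 1) * Real.exp |x| := by linarith
    _ ≤ _ := by gcongr

/-- Moments of normalized Rademacher sums are bounded above. -/
lemma radSum_moment_le {q : ℝ} (hq : 0 ≤ q) : ∃ M : ℝ, 0 < M ∧ ∀ (N : ℕ) (β : Fin N → ℝ),
    ∑ j, β j ^ 2 = 1 → ∫ t in (0:ℝ)..1, |radSum β t| ^ q ≤ M := by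
  obtain ⟨K, hK, h⟩ := rpow_le_cosh hq
  refine ⟨K * (Real.exp (1/2) + Real.exp (1/2)), by positivity, fun N β hβ => ?_⟩
  have hneg : ∀ t, Real.exp (-radSum β t) = Real.exp (radSum (-β) t) := by
    intro t; simp [radSum]
  have hc : Continuous fun x : ℝ => |x| ^ q := continuous_abs.rpow_const fun _ => Or.inr hq
  calc ∫ t in (0:ℝ)..1, |radSum β t| ^ q
      ≤ ∫ t in (0:ℝ)..1, K * (Real.exp (radSum β t) + Real.exp (-radSum β t)) :=
        intervalIntegral.integral_mono (by norm_num) (radSum_ii β hc _ _)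
          (radSum_ii β (Φ := fun x => K * (Real.exp x + Real.exp (-x))) (by fun_prop) _ _)
          fun t => h _
    _ = K * ((∫ t in (0:ℝ)..1, Real.exp (radSum β t)) +
          ∫ t in (0:ℝ)..1, Real.exp (radSum (-β) t)) := by
        rw [intervalIntegral.integral_const_mul,
          intervalIntegral.integral_add (radSum_ii β (by fun_prop) _ _)
            (radSum_ii β (Φ := fun x => Real.exp (-x)) (by fun_prop) _ _)]
        simp_rw [hneg]
    _ ≤ _ := by
        have h1 := radSum_exp β
        have h2 := radSum_exp (-β)
        simp only [Pi.neg_apply, neg_sq] at h2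
        rw [hβ] at h1 h2
        gcongr

/-- Moments of order `p < 2` of normalized Rademacher sums are bounded below: on the set where
the sum is at most `T` its square is at most `T^{2-p}|·|^p`, and elsewhere the fourth moment
controls it. -/
lemma radSum_moment_ge {p : ℝ} (hp : 0 < p) (hp2 : p < 2) : ∃ c : ℝ, 0 < c ∧
    ∀ (N : ℕ) (β : Fin N → ℝ),
    ∑ j, β j ^ 2 = 1 → c ≤ ∫ t in (0:ℝ)..1, |radSum β t| ^ p := by
  obtain ⟨M, hM, h⟩ := radSum_moment_le (q := 4) (by norm_num)
  set T : ℝ := Real.sqrt (2 * M) with hT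
  have hT0 : 0 < T := by positivity
  have hT2 : T ^ 2 = 2 * M := Real.sq_sqrt (by positivity)
  refine ⟨(2 * T ^ (2 - p))⁻¹, by positivity, fun N β hβ => ?_⟩
  have hpt : ∀ x : ℝ, x ^ 2 ≤ T ^ (2 - p) * |x| ^ p + (T ^ 2)⁻¹ * |x| ^ (4 : ℝ) := by
    intro x
    have h4 : |x| ^ (4 : ℝ) = x ^ 2 * x ^ 2 := by
      rw [show (4 : ℝ) = ((4 : ℕ) : ℝ) by norm_num, Real.rpow_natCast, ← sq_abs x]; ring
    rcases le_total |x| T with hx | hx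
    · have : x ^ 2 ≤ T ^ (2 - p) * |x| ^ p := by
        rcases eq_or_ne x 0 with rfl | h0
        · simp [hp.ne']
        calc x ^ 2 = |x| ^ (2 - p) * |x| ^ p := by
              rw [← Real.rpow_add (abs_pos.2 h0), sub_add_cancel, Real.rpow_two, sq_abs]
          _ ≤ _ := by gcongr
      have : 0 ≤ (T ^ 2)⁻¹ * |x| ^ (4 : ℝ) := by positivity
      linarith
    · have : x ^ 2 ≤ (T ^ 2)⁻¹ * |x| ^ (4 : ℝ) := by
        rw [h4, inv_mul_eq_div, le_div_iff₀ (by positivity)]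
        have : T ^ 2 ≤ x ^ 2 := by rw [← sq_abs x]; gcongr
        gcongr
      have : 0 ≤ T ^ (2 - p) * |x| ^ p := by positivity
      linarith
  have hc : ∀ {q : ℝ}, 0 ≤ q → Continuous fun x : ℝ => |x| ^ q :=
    fun hq => continuous_abs.rpow_const fun _ => Or.inr hq
  have i1 := (radSum_ii β (hc hp.le) 0 1).const_mul (T ^ (2 - p))
  have i2 := (radSum_ii β (hc (q := 4) (by norm_num)) 0 1).const_mul (T ^ 2)⁻¹
  have key : (1 : ℝ) ≤ T ^ (2 - p) * (∫ t in (0:ℝ)..1, |radSum β t| ^ p) +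
      (T ^ 2)⁻¹ * ∫ t in (0:ℝ)..1, |radSum β t| ^ (4 : ℝ) := by
    refine ((radSum_sq β).trans hβ).symm.le.trans ?_
    rw [← intervalIntegral.integral_const_mul, ← intervalIntegral.integral_const_mul,
      ← intervalIntegral.integral_add i1 i2]
    exact intervalIntegral.integral_mono (by norm_num)
      (radSum_ii β (Φ := fun x => x ^ 2) (by fun_prop) _ _) (i1.add i2) fun t => hpt _
  have h4 : (T ^ 2)⁻¹ * ∫ t in (0:ℝ)..1, |radSum β t| ^ (4 : ℝ) ≤ 1 / 2 := by
    rw [inv_mul_le_iff₀ (by positivity), hT2]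
    have := h N β hβ
    linarith
  rw [inv_le_iff_one_le_mul₀ (by positivity)]
  linarith

/-- By homogeneity, the `L^q` norm of a Rademacher sum reduces to coefficients of unit `ℓ²` norm. -/
lemma radSum_homog {q : ℝ} (hq : 0 < q) {N : ℕ} (α : Fin N → ℝ) (hS : 0 < ∑ j, α j ^ 2) :
    ∃ β : Fin N → ℝ, ∑ j, β j ^ 2 = 1 ∧
      (∫ t in (0:ℝ)..1, |radSum α t| ^ q) ^ (1/q) =
        (∑ j, α j ^ 2) ^ (1/2 : ℝ) * (∫ t in (0:ℝ)..1, |radSum β t| ^ q) ^ (1/q) := by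
  set s : ℝ := (∑ j, α j ^ 2) ^ (1/2 : ℝ) with hs
  have hs0 : 0 < s := by positivity
  have hs2 : s ^ 2 = ∑ j, α j ^ 2 := by
    rw [hs, ← Real.rpow_natCast, ← Real.rpow_mul hS.le]; norm_num
  refine ⟨fun j => α j / s, ?_, ?_⟩
  · simp_rw [div_pow, ← Finset.sum_div, hs2]
    exact div_self hS.ne'
  have : ∀ t, |radSum α t| ^ q = s ^ q * |radSum (fun j => α j / s) t| ^ q := by
    intro t
    rw [← Real.mul_rpow hs0.le (abs_nonneg _)]
    congr 1
    rw [← abs_of_pos hs0, ← abs_mul, abs_of_pos hs0]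
    simp only [radSum, Finset.mul_sum]
    congr 2; ext j; field_simp
  simp_rw [this]
  rw [intervalIntegral.integral_const_mul, Real.mul_rpow (by positivity)
    (intervalIntegral.integral_nonneg (by norm_num) fun _ _ => by positivity),
    ← Real.rpow_mul hs0.le, mul_one_div_cancel hq.ne', Real.rpow_one]

lemma sum_sq_pos_or {N : ℕ} (α : Fin N → ℝ) : 0 < ∑ j, α j ^ 2 ∨ ∑ j, α j ^ 2 = 0 :=
  (Finset.sum_nonneg fun j _ => sq_nonneg (α j)).lt_or_eq.imp id Eq.symm

/-- The one-term Rademacher sum has all its `L^q[0,1]` norms equal to `1`. -/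
lemma radSum_one (q : ℝ) :
    (∫ t in (0:ℝ)..1, |∑ j, (fun _ : Fin 1 => (1:ℝ)) j * rademacher j t| ^ q) ^ (1/q) = 1 := by
  simp [rad_abs]

/-- The finiteness of the moments makes the defining set nonempty, so that `sInf` is not the junk
value `0`. -/
lemma one_le_khintchineB {q : ℝ} (hq : 0 < q) : 1 ≤ khintchineB q := by
  obtain ⟨M, hM, h⟩ := radSum_moment_le hq.le
  refine le_csInf ⟨M ^ (1/q), by positivity, fun N α => ?_⟩ fun B hB => ?_
  · change (∫ t in (0:ℝ)..1, |radSum α t| ^ q) ^ (1/q) ≤ _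
    rcases sum_sq_pos_or α with hS | hS
    · obtain ⟨β, hβ, e⟩ := radSum_homog hq α hS
      rw [e, mul_comm]
      have := h N β hβ
      have : 0 ≤ ∫ t in (0:ℝ)..1, |radSum β t| ^ q :=
        intervalIntegral.integral_nonneg (by norm_num) fun _ _ => by positivity
      gcongr
    · have h0 : ∀ j, α j = 0 := fun j => by
        have := (Finset.sum_eq_zero_iff_of_nonneg fun j _ => sq_nonneg (α j)).1 hS j
        simpa using this
      simp [radSum, h0, hq.ne']
  · have := hB.2 1 fun _ => 1
    rw [radSum_one] at this
    simpa using this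

/-- Positivity rests on Khintchine's lower bound; without it `A_p` would be `0` and the quotient
in `cc` a junk value. -/
lemma khintchineA_mem {p : ℝ} (hp : 0 < p) (hp2 : p < 2) :
    0 < khintchineA p ∧ khintchineA p ≤ 1 := by
  obtain ⟨c, hc, h⟩ := radSum_moment_ge hp hp2
  have hle : ∀ A ∈ {A : ℝ | 0 ≤ A ∧ ∀ (N : ℕ) (α : Fin N → ℝ),
      A * (∑ j, α j ^ 2) ^ (1/2 : ℝ) ≤
        (∫ t in (0:ℝ)..1, |∑ j, α j * rademacher j t| ^ p) ^ (1/p)}, A ≤ 1 := by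
    intro A hA
    have := hA.2 1 fun _ => 1
    rw [radSum_one] at this
    simpa using this
  have hmem : c ^ (1/p) ∈ {A : ℝ | 0 ≤ A ∧ ∀ (N : ℕ) (α : Fin N → ℝ),
      A * (∑ j, α j ^ 2) ^ (1/2 : ℝ) ≤
        (∫ t in (0:ℝ)..1, |∑ j, α j * rademacher j t| ^ p) ^ (1/p)} := by
    refine ⟨by positivity, fun N α => ?_⟩
    change _ ≤ (∫ t in (0:ℝ)..1, |radSum α t| ^ p) ^ (1/p)
    rcases sum_sq_pos_or α with hS | hS
    · obtain ⟨β, hβ, e⟩ := radSum_homog hp α hS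
      rw [e, mul_comm]
      have := h N β hβ
      gcongr
    · rw [hS, Real.zero_rpow (by norm_num), mul_zero]
      exact Real.rpow_nonneg
        (intervalIntegral.integral_nonneg (by norm_num) fun _ _ => by positivity) _
  exact ⟨(by positivity : 0 < c ^ (1/p)).trans_le (le_csSup ⟨1, hle⟩ hmem),
    csSup_le ⟨_, hmem⟩ hle⟩

lemma one_le_cc {p p₁ p₂ : ℝ} (h1 : 1 ≤ p₁) (h2 : 1 ≤ p₂) (hp : 0 < p) : 1 ≤ cc p p₁ p₂ := by
  unfold cc
  split_ifs with h
  · obtain ⟨hA, hA1⟩ := khintchineA_mem hp (h.trans one_lt_two)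
    have hB1 := one_le_khintchineB (q := p₁) (by linarith)
    have hB2 := one_le_khintchineB (q := p₂) (by linarith)
    rw [one_le_div (by positivity)]
    calc khintchineA p ^ 2 ≤ 1 := pow_le_one₀ hA.le hA1
      _ ≤ _ := one_le_mul_of_one_le_of_one_le hB1 hB2
  · exact le_rfl

/-! ### Fourier inversion and Gaussians -/

section Fourier

variable {ι : Type} [Fintype ι]

lemma rch_eq (ξ x : ι → ℝ) :
    rch ξ x = Complex.exp (((2 * Real.pi * ∑ i, ξ i * x i : ℝ) : ℂ) * Complex.I) := by
  unfold rch; congr 1; push_cast; ring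

lemma norm_rch (ξ x : ι → ℝ) : ‖rch ξ x‖ = 1 := by
  rw [rch_eq, Complex.norm_exp_ofReal_mul_I]

lemma rch_add_left (ξ η x : ι → ℝ) : rch (ξ + η) x = rch ξ x * rch η x := by
  simp only [rch, ← Complex.exp_add]
  congr 1
  simp only [Pi.add_apply, add_mul, Finset.sum_add_distrib]
  push_cast; ring

lemma rch_comm (ξ x : ι → ℝ) : rch ξ x = rch x ξ := by
  simp [rch, mul_comm]

lemma rch_add_right (ξ x y : ι → ℝ) : rch ξ (x + y) = rch ξ x * rch ξ y := by
  rw [rch_comm, rch_add_left, rch_comm x, rch_comm y]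

lemma conj_rch (ξ x : ι → ℝ) : (starRingEnd ℂ) (rch ξ x) = rch (-ξ) x := by
  rw [rch_eq, rch_eq, ← Complex.exp_conj, map_mul, Complex.conj_ofReal, Complex.conj_I]
  simp

@[fun_prop]
lemma continuous_rch {X : Type*} [TopologicalSpace X] {f g : X → ι → ℝ} (hf : Continuous f)
    (hg : Continuous g) : Continuous fun x => rch (f x) (g x) := by
  unfold rch; fun_prop

lemma rch_smul (c : ℝ) (ξ x : ι → ℝ) : rch (c • ξ) x = rch ξ (c • x) := by
  simp only [rch, Pi.smul_apply, smul_eq_mul]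
  congr 4; ext i; ring

lemma continuous_rft {f : (ι → ℝ) → ℂ} (hf : Integrable f) : Continuous (rft f) := by
  refine continuous_of_dominated (bound := fun x => ‖f x‖) (fun ξ => ?_) (fun ξ => ?_) hf.norm ?_
  · simp_rw [conj_rch]
    exact (by fun_prop : Continuous fun x => rch (-ξ) x).aestronglyMeasurable.mul hf.1
  · refine ae_of_all _ fun x => ?_
    simp [norm_rch]
  · refine ae_of_all _ fun x => ?_
    simp_rw [conj_rch]
    fun_prop

/-- The inverse Fourier integral of `a`. -/
def rinv (a : (ι → ℝ) → ℂ) (x : ι → ℝ) : ℂ := ∫ ξ, a ξ * rch ξ x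

lemma rinv_eq_rft (a : (ι → ℝ) → ℂ) (x : ι → ℝ) : rinv a x = rft a (-x) := by
  simp_rw [rinv, rft, conj_rch, neg_neg, rch_comm x, mul_comm]

lemma continuous_rinv {a : (ι → ℝ) → ℂ} (ha : Integrable a) : Continuous (rinv a) := by
  simp_rw [funext (rinv_eq_rft a)]
  exact (continuous_rft ha).comp continuous_neg

lemma norm_rinv_le (a : (ι → ℝ) → ℂ) (x : ι → ℝ) : ‖rinv a x‖ ≤ ∫ ξ, ‖a ξ‖ := by
  refine (norm_integral_le_integral_norm _).trans_eq ?_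
  simp [norm_rch]

open scoped FourierTransform in
lemma rft_eq_fourier (f : (ι → ℝ) → ℂ) (w : EuclideanSpace ℝ ι) :
    rft f w.ofLp = 𝓕 (fun v : EuclideanSpace ℝ ι => f v.ofLp) w := by
  rw [Real.fourier_eq, rft,
    ← (PiLp.volume_preserving_ofLp ι).integral_comp
      (MeasurableEquiv.toLp 2 (ι → ℝ)).symm.measurableEmbedding]
  congr 1; ext v
  rw [Real.fourierChar_apply', Circle.smul_def, smul_eq_mul, conj_rch, rch_eq]
  congr 2
  simp [PiLp.inner_apply]

lemma integrable_ofLp {f : (ι → ℝ) → ℂ} :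
    Integrable (fun v : EuclideanSpace ℝ ι => f v.ofLp) ↔ Integrable f :=
  (PiLp.volume_preserving_ofLp ι).integrable_comp_emb
      (MeasurableEquiv.toLp 2 (ι → ℝ)).symm.measurableEmbedding

open scoped FourierTransform in
lemma rinv_rft {f : (ι → ℝ) → ℂ} (hc : Continuous f) (hf : Integrable f)
    (hf' : Integrable (rft f)) (x : ι → ℝ) : rinv (rft f) x = f x := by
  have h1 : (fun w : EuclideanSpace ℝ ι => rft f w.ofLp) =
      𝓕 (fun v : EuclideanSpace ℝ ι => f v.ofLp) := funext (rft_eq_fourier f)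
  have h2 := congrFun (Continuous.fourierInv_fourier_eq (f := fun v : EuclideanSpace ℝ ι => f v.ofLp)
    (hc.comp (PiLp.continuous_ofLp 2 _)) (integrable_ofLp.2 hf) (h1 ▸ integrable_ofLp.2 hf'))
    (WithLp.toLp 2 x)
  simp only at h2
  rw [← h2, Real.fourierInv_eq_fourier_neg, ← h1, ← rft_eq_fourier, rinv_eq_rft]
  simp

/-- The Fourier transform is formally self-adjoint. -/
lemma integral_rft_mul {u v : (ι → ℝ) → ℂ} (hu : Integrable u) (hv : Integrable v) :
    ∫ x, rft u x * v x = ∫ x, u x * rft v x := by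
  have hi : Integrable (fun z : (ι → ℝ) × (ι → ℝ) => rch (-z.1) z.2 * (v z.1 * u z.2))
      (volume.prod volume) :=
    (hv.mul_prod hu).bdd_mul (c := 1)
      (by fun_prop : Continuous fun z : (ι → ℝ) × (ι → ℝ) => rch (-z.1) z.2).aestronglyMeasurable
      (ae_of_all _ fun z => by simp [norm_rch])
  calc ∫ x, rft u x * v x = ∫ x, ∫ y, rch (-x) y * (v x * u y) := by
        congr 1; ext x
        rw [rft, ← integral_mul_const]
        congr 1; ext y
        rw [conj_rch]; ring
    _ = ∫ y, ∫ x, rch (-x) y * (v x * u y) := integral_integral_swap hi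
    _ = _ := by
        congr 1; ext y
        rw [rft, ← integral_const_mul]
        congr 1; ext x
        rw [conj_rch, rch_comm (-y)]
        have : rch (-x) y = rch x (-y) := by
          rw [← neg_one_smul ℝ x, rch_smul, neg_one_smul]
        rw [this]; ring

open scoped FourierTransform in
/-- Smooth compactly supported functions have integrable Fourier transform. -/
lemma integrable_rft_of_contDiff {g : (ι → ℝ) → ℝ} (hg : ContDiff ℝ (⊤ : ℕ∞) g)
    (hs : HasCompactSupport g) : Integrable (rft fun x => (g x : ℂ)) := by
  have h1 : HasCompactSupport fun v : EuclideanSpace ℝ ι => (g v.ofLp : ℂ) := by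
    have := (hs.comp_homeomorph (PiLp.homeomorph 2 fun _ : ι => ℝ)).comp_left
      (g := ((↑) : ℝ → ℂ)) Complex.ofReal_zero
    exact this
  have h2 : ContDiff ℝ (⊤ : ℕ∞) fun v : EuclideanSpace ℝ ι => (g v.ofLp : ℂ) :=
    Complex.ofRealCLM.contDiff.comp (hg.comp PiLp.contDiff_ofLp)
  rw [← integrable_ofLp, funext (rft_eq_fourier _)]
  exact (𝓕 (h1.toSchwartzMap h2)).integrable

/-- Functions in `SL¹` coincide almost everywhere with the inverse Fourier integral of their
Fourier transform. -/
lemma rinv_rft_ae {f : (ι → ℝ) → ℂ} (hf : rSL1 f) : rinv (rft f) =ᵐ[volume] f := by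
  refine ae_eq_of_integral_contDiff_smul_eq
    (continuous_rinv hf.2).locallyIntegrable hf.1.locallyIntegrable fun g hg hs => ?_
  have hneg : Measure.IsNegInvariant (volume : Measure (ι → ℝ)) := inferInstance
  set γ : (ι → ℝ) → ℝ := fun x => g (-x) with hγ
  have hγ1 : ContDiff ℝ (⊤ : ℕ∞) γ := hg.comp contDiff_neg
  have hγ2 : HasCompactSupport γ := hs.comp_homeomorph (Homeomorph.neg _)
  have hγi : Integrable (fun x => (γ x : ℂ)) :=
    (hγ1.continuous.integrable_of_hasCompactSupport hγ2).ofReal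
  have hγf := integrable_rft_of_contDiff hγ1 hγ2
  calc ∫ x, g x • rinv (rft f) x = ∫ x, (γ x : ℂ) * rft (rft f) x := by
        rw [← integral_neg_eq_self]
        congr 1; ext x
        simp [hγ, rinv_eq_rft]
    _ = ∫ x, rft (rft fun x => (γ x : ℂ)) x * f x := by
        rw [← integral_rft_mul hγi hf.2, ← integral_rft_mul hγf hf.1]
    _ = ∫ x, g x • f x := by
        congr 1; ext x
        have := rinv_rft (f := fun x => (γ x : ℂ)) (by
          have := hγ1.continuous; fun_prop) hγi hγf (-x)
        rw [rinv_eq_rft, neg_neg] at this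
        rw [this]
        simp [hγ]

/-- The Gaussian `e^{-b|x|²}`. -/
def gau (b : ℝ) (x : ι → ℝ) : ℂ := Complex.exp (-(b : ℂ) * ∑ i, (x i : ℂ) ^ 2)

@[fun_prop]
lemma continuous_gau {X : Type*} [TopologicalSpace X] (b : ℝ) {f : X → ι → ℝ}
    (hf : Continuous f) : Continuous fun x => gau b (f x) := by
  unfold gau; fun_prop

lemma gau_eq_ofReal (b : ℝ) (x : ι → ℝ) :
    gau b x = ((Real.exp (-b * ∑ i, x i ^ 2) : ℝ) : ℂ) := by
  unfold gau; push_cast; rfl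

lemma norm_gau (b : ℝ) (x : ι → ℝ) : ‖gau b x‖ = Real.exp (-b * ∑ i, x i ^ 2) := by
  rw [gau_eq_ofReal, Complex.norm_real, Real.norm_of_nonneg (Real.exp_pos _).le]

lemma norm_gau_le {b : ℝ} (hb : 0 < b) (x : ι → ℝ) : ‖gau b x‖ ≤ 1 := by
  rw [norm_gau, Real.exp_le_one_iff]
  have : 0 ≤ ∑ i, x i ^ 2 := Finset.sum_nonneg fun i _ => sq_nonneg _
  nlinarith

lemma integrable_gau {b : ℝ} (hb : 0 < b) : Integrable (gau b : (ι → ℝ) → ℂ) := by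
  have := GaussianFourier.integrable_cexp_neg_mul_sum_add (ι := ι) (b := b)
    (by simpa using hb) 0
  simp only [Pi.zero_apply, zero_mul, Finset.sum_const_zero, add_zero] at this
  exact this

lemma rft_gau {b : ℝ} (hb : 0 < b) :
    rft (gau b : (ι → ℝ) → ℂ) = fun ξ =>
      (Real.pi / b : ℂ) ^ (Fintype.card ι / 2 : ℂ) * gau (Real.pi ^ 2 / b) ξ := by
  ext ξ
  have := GaussianFourier.integral_cexp_neg_mul_sum_add (ι := ι) (b := b)
    (by simpa using hb) (fun i => -2 * Real.pi * Complex.I * ξ i)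
  have hb' : (b : ℂ) ≠ 0 := by exact_mod_cast hb.ne'
  convert this using 1
  · rw [rft]
    congr 1; ext x
    rw [conj_rch, gau, rch, ← Complex.exp_add, add_comm]
    congr 2
    push_cast
    rw [Finset.mul_sum]
    congr 1; ext i
    simp; ring
  · congr 1
    rw [gau]
    congr 1
    simp_rw [mul_pow, Complex.I_sq, ← Finset.mul_sum]
    push_cast
    field_simp
    ring

lemma integrable_rft_gau {b : ℝ} (hb : 0 < b) : Integrable (rft (gau b : (ι → ℝ) → ℂ)) := by
  rw [rft_gau hb]
  exact (integrable_gau (by positivity)).const_mul _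

lemma rinv_rft_gau {b : ℝ} (hb : 0 < b) (x : ι → ℝ) : rinv (rft (gau b)) x = gau b x :=
  rinv_rft (by fun_prop) (integrable_gau hb) (integrable_rft_gau hb) x

/-- The Gaussian `e^{-π|x|²}` has integral one. -/
lemma lintegral_gau_pi : ∫⁻ x : ι → ℝ, ‖gau Real.pi x‖ₑ = 1 := by
  have h1 : ∫ x : ι → ℝ, gau Real.pi x = 1 := by
    have := GaussianFourier.integral_cexp_neg_mul_sum_add (ι := ι) (b := Real.pi)
      (by simpa using Real.pi_pos) 0
    simpa [gau, div_self] using this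
  have h2 : ∫ x : ι → ℝ, ‖gau Real.pi x‖ = 1 := by
    have : ∀ x : ι → ℝ, gau Real.pi x = ((‖gau Real.pi x‖ : ℝ) : ℂ) := fun x => by
      rw [norm_gau, gau_eq_ofReal]
    rw [integral_congr_ae (ae_of_all _ this), integral_complex_ofReal] at h1
    exact_mod_cast h1
  rw [← ofReal_integral_norm_eq_lintegral_enorm (integrable_gau Real.pi_pos), h2, ENNReal.ofReal_one]

/-- Powers of Gaussians: `|e^{-(π/q)|x|²}|^q = |e^{-π|x|²}|`. -/
lemma enorm_gau_rpow {q : ℝ} (hq : 0 < q) (x : ι → ℝ) :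
    ‖gau (Real.pi / q) x‖ₑ ^ q = ‖gau Real.pi x‖ₑ := by
  rw [← ofReal_norm, ← ofReal_norm,
    ENNReal.ofReal_rpow_of_nonneg (norm_nonneg _) hq.le, norm_gau, norm_gau, ← Real.exp_mul]
  congr 2; field_simp

lemma gau_mul (b c : ℝ) (x : ι → ℝ) : gau b x * gau c x = gau (b + c) x := by
  rw [gau, gau, gau, ← Complex.exp_add]; congr 1; push_cast; ring

lemma rft_smul {ε : ℝ} (hε : 0 < ε) (f : (ι → ℝ) → ℂ) (ξ : ι → ℝ) :
    rft (fun x => f (ε • x)) ξ = ((ε ^ Fintype.card ι)⁻¹ : ℝ) • rft f (ε⁻¹ • ξ) := by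
  have := Measure.integral_comp_smul (volume : Measure (ι → ℝ))
    (fun x => (starRingEnd ℂ) (rch (ε⁻¹ • ξ) x) * f x) ε
  rw [Module.finrank_fintype_fun_eq_card, abs_of_pos (by positivity)] at this
  rw [rft, rft, ← this]
  congr 1; ext x
  rw [rch_smul, smul_smul, inv_mul_cancel₀ hε.ne', one_smul]

lemma lintegral_smul_pi {ε : ℝ} (hε : 0 < ε) {h : (ι → ℝ) → ℝ≥0∞} :
    ENNReal.ofReal (ε ^ Fintype.card ι) * ∫⁻ x, h (ε • x) = ∫⁻ x, h x := by
  have h1 := (MeasurableEquiv.smul₀ ε hε.ne' : (ι → ℝ) ≃ᵐ (ι → ℝ)).measurableEmbedding.lintegral_map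
    (μ := volume) h
  have h2 := Measure.map_addHaar_smul (volume : Measure (ι → ℝ)) hε.ne'
  rw [MeasurableEquiv.coe_smul₀, h2, lintegral_smul_measure, Module.finrank_fintype_fun_eq_card,
    abs_of_pos (by positivity), ENNReal.ofReal_inv_of_pos (by positivity)] at h1
  rw [← h1, smul_eq_mul, ← mul_assoc, ENNReal.mul_inv_cancel, one_mul]
  · simp [hε]
  · exact ENNReal.ofReal_ne_top

end Fourier

/-! ### Lifting along the transpose -/

section Transference

/-- Fubini for sheared convolutions: the integrand `a(x) G(y - L x) k(x, y)` is integrable. -/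
lemma integrable_shear {X Y : Type*} [TopologicalSpace X] [SecondCountableTopology X]
    [MeasurableSpace X] [BorelSpace X] [NormedAddCommGroup Y] [SecondCountableTopology Y]
    [MeasurableSpace Y] [BorelSpace Y] {μ : Measure X} {ν : Measure Y} [SFinite μ] [SFinite ν]
    [ν.IsAddRightInvariant] {a : X → ℂ} {G : Y → ℂ} {L : X → Y} {k : X × Y → ℂ} {C : ℝ}
    (ha : Continuous a) (hai : Integrable a μ) (hG : Continuous G) (hGi : Integrable G ν)
    (hL : Continuous L) (hk : Continuous k) (hkb : ∀ z, ‖k z‖ ≤ C) :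
    Integrable (fun z : X × Y => a z.1 * G (z.2 - L z.1) * k z) (μ.prod ν) := by
  refine Integrable.mul_bdd (c := C) ?_ hk.aestronglyMeasurable (ae_of_all _ hkb)
  rw [integrable_prod_iff (by fun_prop : Continuous fun z : X × Y =>
    a z.1 * G (z.2 - L z.1)).aestronglyMeasurable]
  refine ⟨ae_of_all _ fun x => (hGi.comp_sub_right (L x)).const_mul (a x), ?_⟩
  have : ∀ x, ∫ y, ‖a x * G (y - L x)‖ ∂ν = ‖a x‖ * ∫ y, ‖G y‖ ∂ν := by
    intro x
    simp_rw [norm_mul]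
    rw [integral_const_mul, integral_sub_right_eq_self (fun y => ‖G y‖)]
  simp_rw [this]
  exact hai.norm.mul_const _

/-- Fubini and the translation `y = s + L x` in the inner integral. -/
lemma integral_shear {X Y : Type*} [TopologicalSpace X] [SecondCountableTopology X]
    [MeasurableSpace X] [BorelSpace X] [NormedAddCommGroup Y] [SecondCountableTopology Y]
    [MeasurableSpace Y] [BorelSpace Y] {μ : Measure X} {ν : Measure Y} [SFinite μ] [SFinite ν]
    [ν.IsAddRightInvariant] {a : X → ℂ} {G : Y → ℂ} {L : X → Y} {k : X × Y → ℂ} {C : ℝ}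
    (ha : Continuous a) (hai : Integrable a μ) (hG : Continuous G) (hGi : Integrable G ν)
    (hL : Continuous L) (hk : Continuous k) (hkb : ∀ z, ‖k z‖ ≤ C) :
    ∫ y, ∫ x, a x * G (y - L x) * k (x, y) ∂μ ∂ν =
      ∫ x, a x * ∫ s, G s * k (x, s + L x) ∂ν ∂μ := by
  rw [← integral_integral_swap (f := fun x y => a x * G (y - L x) * k (x, y))
    (integrable_shear ha hai hG hGi hL hk hkb)]
  congr 1; ext x
  rw [← integral_add_right_eq_self _ (L x), ← integral_const_mul]
  simp [mul_assoc]

lemma integrable_rBm {ι : Type} [Fintype ι] {m : (ι → ℝ) → (ι → ℝ) → ℂ}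
    (hmc : Continuous fun z : ((ι → ℝ) × (ι → ℝ)) => m z.1 z.2)
    {Cm : ℝ} (hmB : ∀ ξ η, ‖m ξ η‖ ≤ Cm) {a b : (ι → ℝ) → ℂ} (ha : Integrable a)
    (hb : Integrable b) (x : ι → ℝ) :
    Integrable (fun z : (ι → ℝ) × (ι → ℝ) => a z.1 * b z.2 * m z.1 z.2 * rch (z.1 + z.2) x)
      (volume.prod volume) := by
  refine Integrable.mul_bdd (c := 1) (Integrable.mul_bdd (c := Cm) (ha.mul_prod hb)
    hmc.aestronglyMeasurable (ae_of_all _ fun z => hmB _ _)) ?_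
    (ae_of_all _ fun z => (norm_rch _ _).le)
  exact (by fun_prop : Continuous fun z : (ι → ℝ) × (ι → ℝ) =>
    rch (z.1 + z.2) x).aestronglyMeasurable

lemma rBm_eq_prod {ι : Type} [Fintype ι] {m : (ι → ℝ) → (ι → ℝ) → ℂ}
    (hmc : Continuous fun z : ((ι → ℝ) × (ι → ℝ)) => m z.1 z.2)
    {Cm : ℝ} (hmB : ∀ ξ η, ‖m ξ η‖ ≤ Cm) {f g : (ι → ℝ) → ℂ} (hf : Integrable (rft f))
    (hg : Integrable (rft g)) (x : ι → ℝ) :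
    rBm m f g x = ∫ z : (ι → ℝ) × (ι → ℝ),
      rft f z.1 * rft g z.2 * m z.1 z.2 * rch (z.1 + z.2) x := by
  rw [Measure.volume_eq_prod, integral_prod _ (integrable_rBm hmc hmB hf hg x)]
  rfl

variable {d n : ℕ}

/-- The transpose `Aᵀ : ℝⁿ → ℝ^d` of `A` with respect to the standard bases. -/
def tr (A : (Fin d → ℝ) →ₗ[ℝ] (Fin n → ℝ)) (y : Fin n → ℝ) : Fin d → ℝ :=
  (LinearMap.toMatrix' A).transpose.mulVec y

lemma rch_tr (A : (Fin d → ℝ) →ₗ[ℝ] (Fin n → ℝ)) (ξ : Fin d → ℝ) (y : Fin n → ℝ) :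
    rch ξ (tr A y) = rch (A ξ) y := by
  have : ∑ i, ξ i * tr A y i = ∑ i, A ξ i * y i := by
    have h : A ξ = (LinearMap.toMatrix' A).mulVec ξ := (LinearMap.toMatrix'_mulVec A ξ).symm
    rw [h]
    change ξ ⬝ᵥ tr A y = (LinearMap.toMatrix' A).mulVec ξ ⬝ᵥ y
    rw [tr, Matrix.dotProduct_mulVec, Matrix.vecMul_transpose]
  rw [rch, rch, this]

@[fun_prop]
lemma continuous_tr (A : (Fin d → ℝ) →ₗ[ℝ] (Fin n → ℝ)) : Continuous (tr A) := by
  unfold tr; fun_prop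

/-- The lift to `ℝⁿ`, based at `x : ℝ^d`, of the function `rinv a` on `ℝ^d`:
the map `y ↦ e^{-c|εy|²} (rinv a)(x + Aᵀy)`. The Gaussian makes it integrable. It is
parametrized by `a`, which will be the Fourier transform `rft f`, so that `rinv a` is the
continuous representative of `f`. -/
def liftFn (A : (Fin d → ℝ) →ₗ[ℝ] (Fin n → ℝ)) (c ε : ℝ) (a : (Fin d → ℝ) → ℂ)
    (x : Fin d → ℝ) (y : Fin n → ℝ) : ℂ :=
  gau c (ε • y) * rinv a (x + tr A y)

variable (A : (Fin d → ℝ) →ₗ[ℝ] (Fin n → ℝ)) {c ε : ℝ}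

lemma integrable_gau_smul (hc : 0 < c) (hε : 0 < ε) :
    Integrable (fun y : Fin n → ℝ => gau c (ε • y)) :=
  (integrable_gau hc).comp_smul hε.ne'

lemma integrable_lift (hc : 0 < c) (hε : 0 < ε) {a : (Fin d → ℝ) → ℂ} (ha : Integrable a)
    (x : Fin d → ℝ) : Integrable (liftFn A c ε a x) := by
  have := continuous_rinv ha
  refine (integrable_gau_smul hc hε).mul_bdd (c := ∫ ξ, ‖a ξ‖) ?_
    (ae_of_all _ fun y => norm_rinv_le _ _)
  exact (by fun_prop : Continuous fun y => rinv a (x + tr A y)).aestronglyMeasurable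

/-- The Fourier transform of a lift: each frequency `ξ` of `rinv a` is carried to `Aξ` and
spread out by the Fourier transform of the dilated Gaussian. -/
lemma rft_lift (hc : 0 < c) (hε : 0 < ε) {a : (Fin d → ℝ) → ℂ} (ha : Integrable a)
    (x : Fin d → ℝ) (u : Fin n → ℝ) :
    rft (liftFn A c ε a x) u =
      ∫ ξ, a ξ * rch ξ x * rft (fun y => gau c (ε • y)) (u - A ξ) := by
  have hi : Integrable (fun z : (Fin n → ℝ) × (Fin d → ℝ) =>
      gau c (ε • z.1) * a z.2 * (rch (-u) z.1 * rch z.2 (x + tr A z.1)))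
      (volume.prod volume) := by
    refine ((integrable_gau_smul hc hε).mul_prod ha).mul_bdd (c := 1) ?_
      (ae_of_all _ fun z => by simp [norm_rch])
    exact (by fun_prop : Continuous fun z : (Fin n → ℝ) × (Fin d → ℝ) =>
      rch (-u) z.1 * rch z.2 (x + tr A z.1)).aestronglyMeasurable
  calc rft (liftFn A c ε a x) u
      = ∫ y, ∫ ξ, gau c (ε • y) * a ξ * (rch (-u) y * rch ξ (x + tr A y)) := by
        rw [rft]
        congr 1; ext y
        rw [conj_rch, liftFn, rinv, ← mul_assoc, ← integral_const_mul]
        congr 1; ext ξ; ring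
    _ = ∫ ξ, ∫ y, gau c (ε • y) * a ξ * (rch (-u) y * rch ξ (x + tr A y)) :=
        integral_integral_swap hi
    _ = _ := by
        congr 1; ext ξ
        rw [rft, ← integral_const_mul]
        congr 1; ext y
        rw [conj_rch, neg_sub, sub_eq_add_neg, rch_add_left, rch_add_right, rch_tr]
        ring

lemma integrable_rft_gau_smul (hc : 0 < c) (hε : 0 < ε) :
    Integrable (rft (fun y : Fin n → ℝ => gau c (ε • y))) := by
  rw [funext (rft_smul hε _)]
  have h := (integrable_rft_gau (ι := Fin n) hc).comp_smul (inv_ne_zero hε.ne')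
  exact h.smul ((ε ^ Fintype.card (Fin n))⁻¹ : ℝ)

lemma integrable_rft_lift (hc : 0 < c) (hε : 0 < ε) {a : (Fin d → ℝ) → ℂ} (ha : Integrable a)
    (hac : Continuous a) (x : Fin d → ℝ) : Integrable (rft (liftFn A c ε a x)) := by
  have hA : Continuous A := A.continuous_of_finiteDimensional
  have h := integrable_shear (μ := volume) (ν := volume) (a := fun ξ => a ξ * rch ξ x)
    (G := rft (fun y : Fin n → ℝ => gau c (ε • y))) (L := A) (k := fun _ => 1) (C := 1)
    (by fun_prop) (ha.mul_bdd (c := 1)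
      (by fun_prop : Continuous fun ξ => rch ξ x).aestronglyMeasurable
      (ae_of_all _ fun _ => (norm_rch _ _).le))
    (continuous_rft (integrable_gau_smul hc hε)) (integrable_rft_gau_smul hc hε) hA
    continuous_const (by simp)
  refine h.integral_prod_right.congr (ae_of_all _ fun u => ?_)
  simp only [rft_lift A hc hε ha, mul_one]

lemma lift_rSL1 (hc : 0 < c) (hε : 0 < ε) {a : (Fin d → ℝ) → ℂ} (ha : Integrable a)
    (hac : Continuous a) (x : Fin d → ℝ) : rSL1 (liftFn A c ε a x) :=
  ⟨integrable_lift A hc hε ha x, integrable_rft_lift A hc hε ha hac x⟩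

/-- The integrand of `tker`, at the frequencies `q = ((ξ, η), (u, v))`. -/
def tkerInt (m : (Fin n → ℝ) → (Fin n → ℝ) → ℂ) (a b : (Fin d → ℝ) → ℂ)
    (G₁ G₂ : (Fin n → ℝ) → ℂ) (ε : ℝ) (w : Fin d → ℝ) (z : Fin n → ℝ)
    (q : ((Fin d → ℝ) × (Fin d → ℝ)) × ((Fin n → ℝ) × (Fin n → ℝ))) : ℂ :=
  (a q.1.1 * b q.1.2 * (G₁ q.2.1 * G₂ q.2.2)) *
    (m (A q.1.1 + ε • q.2.1) (A q.1.2 + ε • q.2.2) *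
      (rch (q.1.1 + q.1.2) w * rch (q.2.1 + q.2.2) z))

/-- The function of `w : ℝ^d` and `z : ℝⁿ` given by
`∫ a(ξ) b(η) G₁(u) G₂(v) m(Aξ + εu, Aη + εv) e^{2πi(ξ+η)·w} e^{2πi(u+v)·z} dξ dη du dv`.
For `ε > 0` it describes the operator of `m` on lifts (`rBm_lift`); at `ε = 0` it splits into
the operator of `m(Aξ, Aη)` on `ℝ^d` times a function of `z` (`tker_zero`). -/
def tker (m : (Fin n → ℝ) → (Fin n → ℝ) → ℂ) (a b : (Fin d → ℝ) → ℂ)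
    (G₁ G₂ : (Fin n → ℝ) → ℂ) (ε : ℝ) (w : Fin d → ℝ) (z : Fin n → ℝ) : ℂ :=
  ∫ q, tkerInt A m a b G₁ G₂ ε w z q ∂((volume.prod volume).prod (volume.prod volume))

variable {m : (Fin n → ℝ) → (Fin n → ℝ) → ℂ} {Cm : ℝ} {a b : (Fin d → ℝ) → ℂ}
  {G₁ G₂ : (Fin n → ℝ) → ℂ}

/-- The bounded factor of `tkerInt` is jointly continuous in `((ε, w, z), q)`. -/
lemma continuous_phase (hmc : Continuous fun z : ((Fin n → ℝ) × (Fin n → ℝ)) => m z.1 z.2) :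
    Continuous fun t : (ℝ × (Fin d → ℝ) × (Fin n → ℝ)) ×
      (((Fin d → ℝ) × (Fin d → ℝ)) × ((Fin n → ℝ) × (Fin n → ℝ))) =>
      m (A t.2.1.1 + t.1.1 • t.2.2.1) (A t.2.1.2 + t.1.1 • t.2.2.2) *
      (rch (t.2.1.1 + t.2.1.2) t.1.2.1 * rch (t.2.2.1 + t.2.2.2) t.1.2.2) := by
  have hA : Continuous A := A.continuous_of_finiteDimensional
  refine Continuous.mul ?_ (by fun_prop)
  exact hmc.comp (f := fun t : (ℝ × (Fin d → ℝ) × (Fin n → ℝ)) ×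
      (((Fin d → ℝ) × (Fin d → ℝ)) × ((Fin n → ℝ) × (Fin n → ℝ))) =>
      (A t.2.1.1 + t.1.1 • t.2.2.1, A t.2.1.2 + t.1.1 • t.2.2.2)) (by fun_prop)

lemma integrable_amp (ha : Integrable a) (hb : Integrable b) (hG₁ : Integrable G₁)
    (hG₂ : Integrable G₂) : Integrable (fun q : ((Fin d → ℝ) × (Fin d → ℝ)) ×
      ((Fin n → ℝ) × (Fin n → ℝ)) => a q.1.1 * b q.1.2 * (G₁ q.2.1 * G₂ q.2.2))
      ((volume.prod volume).prod (volume.prod volume)) :=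
  (ha.mul_prod hb).mul_prod (hG₁.mul_prod hG₂)

lemma aesm_tkerInt (hmc : Continuous fun z : ((Fin n → ℝ) × (Fin n → ℝ)) => m z.1 z.2)
    (ha : Integrable a) (hb : Integrable b) (hG₁ : Integrable G₁) (hG₂ : Integrable G₂)
    (ε : ℝ) (w : Fin d → ℝ) (z : Fin n → ℝ) :
    AEStronglyMeasurable (tkerInt A m a b G₁ G₂ ε w z)
      ((volume.prod volume).prod (volume.prod volume)) :=
  (integrable_amp ha hb hG₁ hG₂).1.mul ((continuous_phase A hmc).comp
    (by fun_prop : Continuous fun q => ((ε, w, z), q))).aestronglyMeasurable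

lemma norm_tkerInt_le (hmB : ∀ ξ η, ‖m ξ η‖ ≤ Cm) (ε : ℝ) (w : Fin d → ℝ) (z : Fin n → ℝ)
    (q : ((Fin d → ℝ) × (Fin d → ℝ)) × ((Fin n → ℝ) × (Fin n → ℝ))) :
    ‖tkerInt A m a b G₁ G₂ ε w z q‖ ≤
      ‖a q.1.1 * b q.1.2 * (G₁ q.2.1 * G₂ q.2.2)‖ * Cm := by
  rw [tkerInt, norm_mul]
  gcongr
  simpa [norm_rch] using hmB _ _

lemma integrable_tkerInt (hmc : Continuous fun z : ((Fin n → ℝ) × (Fin n → ℝ)) => m z.1 z.2)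
    (hmB : ∀ ξ η, ‖m ξ η‖ ≤ Cm)
    (ha : Integrable a) (hb : Integrable b) (hG₁ : Integrable G₁) (hG₂ : Integrable G₂)
    (ε : ℝ) (w : Fin d → ℝ) (z : Fin n → ℝ) :
    Integrable (tkerInt A m a b G₁ G₂ ε w z)
      ((volume.prod volume).prod (volume.prod volume)) :=
  ((integrable_amp ha hb hG₁ hG₂).norm.mul_const Cm).mono'
    (aesm_tkerInt A hmc ha hb hG₁ hG₂ ε w z) (ae_of_all _ (norm_tkerInt_le A hmB ε w z))

lemma continuous_tker (hmc : Continuous fun z : ((Fin n → ℝ) × (Fin n → ℝ)) => m z.1 z.2)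
    (hmB : ∀ ξ η, ‖m ξ η‖ ≤ Cm)
    (ha : Integrable a) (hb : Integrable b) (hG₁ : Integrable G₁) (hG₂ : Integrable G₂) :
    Continuous fun t : ℝ × (Fin d → ℝ) × (Fin n → ℝ) =>
      tker A m a b G₁ G₂ t.1 t.2.1 t.2.2 :=
  continuous_of_dominated
    (fun t => aesm_tkerInt A hmc ha hb hG₁ hG₂ t.1 t.2.1 t.2.2)
    (fun t => ae_of_all _ (norm_tkerInt_le A hmB t.1 t.2.1 t.2.2))
    ((integrable_amp ha hb hG₁ hG₂).norm.mul_const Cm)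
    (ae_of_all _ fun q => continuous_const.mul ((continuous_phase A hmc).comp
      (by fun_prop : Continuous fun t => (t, q))))

lemma tker_zero {f g : (Fin d → ℝ) → ℂ}
    (hmc : Continuous fun z : ((Fin n → ℝ) × (Fin n → ℝ)) => m z.1 z.2)
    (hmB : ∀ ξ η, ‖m ξ η‖ ≤ Cm) (hf : rSL1 f) (hg : rSL1 g)
    (w : Fin d → ℝ) (z : Fin n → ℝ) :
    tker A m (rft f) (rft g) G₁ G₂ 0 w z =
      rBm (fun ξ η => m (A ξ) (A η)) f g w * (rinv G₁ z * rinv G₂ z) := by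
  have hA : Continuous A := A.continuous_of_finiteDimensional
  rw [rBm_eq_prod (m := fun ξ η => m (A ξ) (A η))
    (hmc.comp (by fun_prop : Continuous fun z : (Fin d → ℝ) × (Fin d → ℝ) => (A z.1, A z.2)))
    (fun _ _ => hmB _ _) hf.2 hg.2, rinv, rinv, ← integral_prod_mul, Measure.volume_eq_prod,
    ← integral_prod_mul, tker]
  congr 1; ext q
  simp only [tkerInt, zero_smul, add_zero, rch_add_left (q.2.1)]
  ring

/-- The substitution `s ↦ εs` in the integral over the frequencies `s = (u, v)`. -/
lemma inner_scale {c₁ c₂ : ℝ} (hε : 0 < ε) (x : Fin d → ℝ) (y : Fin n → ℝ)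
    (ζ : (Fin d → ℝ) × (Fin d → ℝ)) :
    a ζ.1 * b ζ.2 * rch (ζ.1 + ζ.2) x *
      ∫ s : (Fin n → ℝ) × (Fin n → ℝ),
        rft (fun y : Fin n → ℝ => gau c₁ (ε • y)) s.1 *
          rft (fun y : Fin n → ℝ => gau c₂ (ε • y)) s.2 *
        (m (s.1 + A ζ.1) (s.2 + A ζ.2) * rch ((s.1 + A ζ.1) + (s.2 + A ζ.2)) y)
        ∂(volume.prod volume) =
    ∫ s, tkerInt A m a b (rft (gau c₁)) (rft (gau c₂)) ε (x + tr A y) (ε • y) (ζ, s)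
      ∂(volume.prod volume) := by
  have : Measure.IsAddHaarMeasure
      ((volume.prod volume) : Measure ((Fin n → ℝ) × (Fin n → ℝ))) :=
    Measure.prod.instIsAddHaarMeasure _ _
  have hsc := Measure.integral_comp_smul
    ((volume.prod volume) : Measure ((Fin n → ℝ) × (Fin n → ℝ)))
    (fun s => rft (fun y : Fin n → ℝ => gau c₁ (ε • y)) s.1 *
          rft (fun y : Fin n → ℝ => gau c₂ (ε • y)) s.2 *
        (m (s.1 + A ζ.1) (s.2 + A ζ.2) * rch ((s.1 + A ζ.1) + (s.2 + A ζ.2)) y)) ε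
  have hr : Module.finrank ℝ ((Fin n → ℝ) × (Fin n → ℝ)) = n + n := by simp
  rw [hr, abs_of_pos (by positivity), eq_inv_smul_iff₀ (by positivity)] at hsc
  rw [← hsc, ← integral_smul, ← integral_const_mul]
  congr 1; ext s
  have hε' : (ε : ℂ) ≠ 0 := by exact_mod_cast hε.ne'
  have hs : ∀ (c : ℝ) (s : Fin n → ℝ), rft (fun y : Fin n → ℝ => gau c (ε • y)) (ε • s) =
      ((ε ^ n)⁻¹ : ℝ) • rft (gau c) s := fun c s => by
    rw [rft_smul hε (gau c), smul_smul, inv_mul_cancel₀ hε.ne', one_smul, Fintype.card_fin]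
  have h1 : rch (s.1 + s.2) (ε • y) = rch (ε • s.1) y * rch (ε • s.2) y := by
    rw [rch_add_left, rch_smul, rch_smul]
  have h2 : rch (ε • s.1 + A ζ.1 + (ε • s.2 + A ζ.2)) y =
      rch (ε • s.1) y * rch (A ζ.1) y * (rch (ε • s.2) y * rch (A ζ.2) y) := by
    simp only [rch_add_left]
  have h3 : rch (ζ.1 + ζ.2) (x + tr A y) =
      rch (ζ.1 + ζ.2) x * (rch (A ζ.1) y * rch (A ζ.2) y) := by
    rw [rch_add_right, rch_add_left ζ.1 ζ.2 (tr A y), rch_tr, rch_tr]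
  rw [Prod.smul_fst, Prod.smul_snd, hs, hs, tkerInt, h1, h2, h3,
    add_comm (ε • s.1), add_comm (ε • s.2), Complex.real_smul, Complex.real_smul,
    Complex.real_smul]
  push_cast
  generalize rft (gau c₁) s.1 = X₁
  generalize rft (gau c₂) s.2 = X₂
  generalize m (A ζ.1 + ε • s.1) (A ζ.2 + ε • s.2) = X₃
  field_simp
  ring

/-- The operator of `m` on lifts is a sheared and dilated copy of `tker`: expand both Fourier
transforms by `rft_lift`, then substitute `(u, v) ↦ (Aξ + εu, Aη + εv)` in the frequencies. -/
lemma rBm_lift {c₁ c₂ : ℝ} (hc₁ : 0 < c₁) (hc₂ : 0 < c₂) (hε : 0 < ε)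
    (hmc : Continuous fun z : ((Fin n → ℝ) × (Fin n → ℝ)) => m z.1 z.2)
    (hmB : ∀ ξ η, ‖m ξ η‖ ≤ Cm)
    (ha : Integrable a) (hb : Integrable b) (hac : Continuous a) (hbc : Continuous b)
    (x : Fin d → ℝ) (y : Fin n → ℝ) :
    rBm m (liftFn A c₁ ε a x) (liftFn A c₂ ε b x) y =
      tker A m a b (rft (gau c₁)) (rft (gau c₂)) ε (x + tr A y) (ε • y) := by
  have hA : Continuous A := A.continuous_of_finiteDimensional
  set g₁ := rft (fun y : Fin n → ℝ => gau c₁ (ε • y)) with hg₁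
  set g₂ := rft (fun y : Fin n → ℝ => gau c₂ (ε • y)) with hg₂
  have hg₁c : Continuous g₁ := continuous_rft (integrable_gau_smul hc₁ hε)
  have hg₂c : Continuous g₂ := continuous_rft (integrable_gau_smul hc₂ hε)
  have hsh := integral_shear (X := (Fin d → ℝ) × (Fin d → ℝ)) (Y := (Fin n → ℝ) × (Fin n → ℝ))
    (μ := volume.prod volume) (ν := volume.prod volume)
    (a := fun ζ => a ζ.1 * b ζ.2 * rch (ζ.1 + ζ.2) x)
    (G := fun s => g₁ s.1 * g₂ s.2) (L := fun ζ => (A ζ.1, A ζ.2))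
    (k := fun t => m t.2.1 t.2.2 * rch (t.2.1 + t.2.2) y) (C := Cm) (by fun_prop)
    ((ha.mul_prod hb).mul_bdd (c := 1) (by fun_prop : Continuous
      fun ζ : (Fin d → ℝ) × (Fin d → ℝ) => rch (ζ.1 + ζ.2) x).aestronglyMeasurable
      (ae_of_all _ fun _ => (norm_rch _ _).le)) (by fun_prop)
    ((integrable_rft_gau_smul hc₁ hε).mul_prod (integrable_rft_gau_smul hc₂ hε))
    (by fun_prop)
    ((hmc.comp continuous_snd).mul (by fun_prop))
    (fun t => by simpa [norm_rch] using hmB _ _)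
  rw [rBm_eq_prod hmc hmB (integrable_rft_lift A hc₁ hε ha hac x)
    (integrable_rft_lift A hc₂ hε hb hbc x), tker, integral_prod _ (integrable_tkerInt A hmc hmB
      ha hb (integrable_rft_gau hc₁) (integrable_rft_gau hc₂) _ _ _)]
  refine Eq.trans ?_ (hsh.trans ?_)
  · rw [Measure.volume_eq_prod]
    congr 1; ext u
    rw [rft_lift A hc₁ hε ha, rft_lift A hc₂ hε hb, ← integral_prod_mul, ← integral_mul_const,
      ← integral_mul_const]
    congr 1; ext ζ
    simp only [Prod.fst_sub, Prod.snd_sub, rch_add_left ζ.1]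
    ring
  · congr 1; ext ζ
    exact inner_scale A hε x y ζ

end Transference

/-! ### The transferred estimate -/

section Estimate

lemma eLpNorm_ofReal_eq {X : Type*} [MeasurableSpace X] {μ : Measure X} (f : X → ℂ) {q : ℝ}
    (hq : 0 < q) : eLpNorm f (ENNReal.ofReal q) μ = (∫⁻ x, ‖f x‖ₑ ^ q ∂μ) ^ (1 / q) := by
  rw [eLpNorm_eq_lintegral_rpow_enorm_toReal (by simpa using hq) ENNReal.ofReal_ne_top,
    ENNReal.toReal_ofReal hq.le]

variable {d n : ℕ} (A : (Fin d → ℝ) →ₗ[ℝ] (Fin n → ℝ)) {ε : ℝ}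

/-- The change of variables `(w, z) = (x + Aᵀy, εy)`, whose Jacobian is `εⁿ` whatever `A` is. -/
lemma lintegral_shear (hε : 0 < ε) {F : (Fin d → ℝ) → (Fin n → ℝ) → ℝ≥0∞}
    (hF : Measurable fun t : (Fin d → ℝ) × (Fin n → ℝ) => F t.1 t.2) :
    ENNReal.ofReal (ε ^ n) * ∫⁻ x, ∫⁻ y, F (x + tr A y) (ε • y) = ∫⁻ w, ∫⁻ z, F w z := by
  have hs : Measurable fun t : (Fin d → ℝ) × (Fin n → ℝ) => F (t.1 + tr A t.2) (ε • t.2) :=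
    hF.comp (by fun_prop : Continuous fun t : (Fin d → ℝ) × (Fin n → ℝ) =>
      (t.1 + tr A t.2, ε • t.2)).measurable
  rw [lintegral_lintegral_swap hs.aemeasurable, lintegral_lintegral_swap hF.aemeasurable]
  have h : ∀ y, ∫⁻ x, F (x + tr A y) (ε • y) = ∫⁻ x, F x (ε • y) := fun y =>
    lintegral_add_right_eq_self (fun x => F x (ε • y)) (tr A y)
  simp_rw [h]
  simpa using lintegral_smul_pi (ι := Fin n) hε (h := fun z => ∫⁻ x, F x z)

lemma measurable_liftFn {q : ℝ} {a : (Fin d → ℝ) → ℂ} (ha : Integrable a) (c ε : ℝ) :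
    Measurable fun t : (Fin d → ℝ) × (Fin n → ℝ) => ‖liftFn A c ε a t.1 t.2‖ₑ ^ q := by
  have := continuous_rinv ha
  exact ((by unfold liftFn; fun_prop : Continuous fun t : (Fin d → ℝ) × (Fin n → ℝ) =>
    liftFn A c ε a t.1 t.2).measurable.enorm).pow_const q

/-- With the Gaussian normalized in `L^q`, the lifts of `f` have, after rescaling, the same
`L^q` norm as `f`. -/
lemma lintegral_liftFn (hε : 0 < ε) {q : ℝ} (hq : 0 < q) {f : (Fin d → ℝ) → ℂ} (hf : rSL1 f) :
    ENNReal.ofReal (ε ^ n) *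
      ∫⁻ x, ∫⁻ y : Fin n → ℝ, ‖liftFn A (Real.pi / q) ε (rft f) x y‖ₑ ^ q =
      ∫⁻ w, ‖f w‖ₑ ^ q := by
  have hr := continuous_rinv hf.2
  have hm : Measurable fun t : (Fin d → ℝ) × (Fin n → ℝ) =>
      ‖gau (Real.pi / q) t.2 * rinv (rft f) t.1‖ₑ ^ q :=
    ((by fun_prop : Continuous fun t : (Fin d → ℝ) × (Fin n → ℝ) =>
      gau (Real.pi / q) t.2 * rinv (rft f) t.1).measurable.enorm).pow_const q
  refine (lintegral_shear A hε (F := fun w z => ‖gau (Real.pi / q) z * rinv (rft f) w‖ₑ ^ q)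
    hm).trans ?_
  have h : ∀ w, ∫⁻ z : Fin n → ℝ, ‖gau (Real.pi / q) z * rinv (rft f) w‖ₑ ^ q =
      ‖rinv (rft f) w‖ₑ ^ q := fun w => by
    simp_rw [enorm_mul, ENNReal.mul_rpow_of_nonneg _ _ hq.le, enorm_gau_rpow hq]
    rw [lintegral_mul_const _ (by fun_prop), lintegral_gau_pi, one_mul]
  simp_rw [h]
  refine lintegral_congr_ae ?_
  filter_upwards [rinv_rft_ae hf] with w hw
  rw [hw]

variable {m : (Fin n → ℝ) → (Fin n → ℝ) → ℂ} {Cm p p₁ p₂ : ℝ} {C : ℝ≥0∞}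
  {f g : (Fin d → ℝ) → ℂ}

/-- The bound for `m` is applied to the lifts of `f` and `g` for each fixed `x`, then Hölder's
inequality is used in `x`, with the conjugate exponents `p₁/p` and `p₂/p`. The Jacobian `εⁿ` of
`lintegral_shear` is absorbed because `p/p₁ + p/p₂ = 1`. -/
lemma lintegral_tker_le (h1 : 0 < p₁) (h2 : 0 < p₂) (hp : 0 < p) (hrel : 1/p₁ + 1/p₂ = 1/p)
    (hmc : Continuous fun z : ((Fin n → ℝ) × (Fin n → ℝ)) => m z.1 z.2)
    (hmB : ∀ ξ η, ‖m ξ η‖ ≤ Cm) (hCt : C ≠ ⊤)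
    (hC : ∀ f g : (Fin n → ℝ) → ℂ, rSL1 f → rSL1 g →
      eLpNorm (rBm m f g) (ENNReal.ofReal p) volume ≤
        C * eLpNorm f (ENNReal.ofReal p₁) volume * eLpNorm g (ENNReal.ofReal p₂) volume)
    (hf : rSL1 f) (hg : rSL1 g) (hε : 0 < ε) :
    ∫⁻ w, ∫⁻ z, ‖tker A m (rft f) (rft g) (rft (gau (Real.pi / p₁)))
      (rft (gau (Real.pi / p₂))) ε w z‖ₑ ^ p ≤
    (C * eLpNorm f (ENNReal.ofReal p₁) volume * eLpNorm g (ENNReal.ofReal p₂) volume) ^ p := by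
  have hc₁ : 0 < Real.pi / p₁ := by positivity
  have hc₂ : 0 < Real.pi / p₂ := by positivity
  have hexp : p / p₁ + p / p₂ = 1 := by
    rw [div_eq_mul_one_div p p₁, div_eq_mul_one_div p p₂, ← mul_add, hrel, mul_one_div,
      div_self hp.ne']
  have hT := continuous_tker A hmc hmB hf.2 hg.2 (integrable_rft_gau (ι := Fin n) hc₁)
    (integrable_rft_gau (ι := Fin n) hc₂)
  set κ := ENNReal.ofReal (ε ^ n) with hκ
  have hκ0 : κ ≠ 0 := by simpa [hκ] using pow_pos hε n
  have hκt : κ ≠ ⊤ := ENNReal.ofReal_ne_top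
  set I : (Fin d → ℝ) → ℝ≥0∞ := fun x =>
    ∫⁻ y : Fin n → ℝ, ‖liftFn A (Real.pi / p₁) ε (rft f) x y‖ₑ ^ p₁ with hI
  set J : (Fin d → ℝ) → ℝ≥0∞ := fun x =>
    ∫⁻ y : Fin n → ℝ, ‖liftFn A (Real.pi / p₂) ε (rft g) x y‖ₑ ^ p₂ with hJ
  have hIm : Measurable I := (measurable_liftFn A hf.2 _ _).lintegral_prod_right
  have hJm : Measurable J := (measurable_liftFn A hg.2 _ _).lintegral_prod_right
  have hpow : ∀ u v : ℝ≥0∞, (C * u ^ (1 / p₁) * v ^ (1 / p₂)) ^ p =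
      C ^ p * (u ^ (p / p₁) * v ^ (p / p₂)) := fun u v => by
    rw [ENNReal.mul_rpow_of_nonneg _ _ hp.le, ENNReal.mul_rpow_of_nonneg _ _ hp.le,
      ← ENNReal.rpow_mul, ← ENNReal.rpow_mul, one_div_mul_eq_div, one_div_mul_eq_div, mul_assoc]
  have hx : ∀ x, ∫⁻ y, ‖tker A m (rft f) (rft g) (rft (gau (Real.pi / p₁)))
      (rft (gau (Real.pi / p₂))) ε (x + tr A y) (ε • y)‖ₑ ^ p ≤
      C ^ p * (I x ^ (p / p₁) * J x ^ (p / p₂)) := fun x => by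
    have := hC _ _ (lift_rSL1 A hc₁ hε hf.2 (continuous_rft hf.1) x)
      (lift_rSL1 A hc₂ hε hg.2 (continuous_rft hg.1) x)
    rw [eLpNorm_ofReal_eq _ hp, eLpNorm_ofReal_eq _ h1, eLpNorm_ofReal_eq _ h2] at this
    have := ENNReal.rpow_le_rpow this hp.le
    rw [← ENNReal.rpow_mul, one_div_mul_cancel hp.ne', ENNReal.rpow_one, hpow] at this
    simpa only [rBm_lift A hc₁ hc₂ hε hmc hmB hf.2 hg.2 (continuous_rft hf.1)
      (continuous_rft hg.1)] using this
  rw [eLpNorm_ofReal_eq _ h1, eLpNorm_ofReal_eq _ h2, hpow, ← lintegral_liftFn A hε h1 hf,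
    ← lintegral_liftFn A hε h2 hg, ← lintegral_shear A hε
      (F := fun w z => ‖tker A m (rft f) (rft g) (rft (gau (Real.pi / p₁)))
        (rft (gau (Real.pi / p₂))) ε w z‖ₑ ^ p)
      ((hT.comp (by fun_prop : Continuous fun t : (Fin d → ℝ) × (Fin n → ℝ) =>
        (ε, t.1, t.2))).measurable.enorm.pow_const p)]
  calc κ * ∫⁻ x, ∫⁻ y, ‖tker A m (rft f) (rft g) (rft (gau (Real.pi / p₁)))
        (rft (gau (Real.pi / p₂))) ε (x + tr A y) (ε • y)‖ₑ ^ p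
      ≤ κ * ∫⁻ x, C ^ p * (I x ^ (p / p₁) * J x ^ (p / p₂)) := by
        gcongr with x; exact hx x
    _ = κ * (C ^ p * ∫⁻ x, I x ^ (p / p₁) * J x ^ (p / p₂)) := by
        rw [lintegral_const_mul' _ _ (ENNReal.rpow_ne_top_of_nonneg hp.le hCt)]
    _ ≤ κ * (C ^ p * ((∫⁻ x, I x) ^ (p / p₁) * (∫⁻ x, J x) ^ (p / p₂))) := by
        gcongr
        exact ENNReal.lintegral_mul_norm_pow_le hIm.aemeasurable hJm.aemeasurable
          (by positivity) (by positivity) hexp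
    _ = C ^ p * ((κ * ∫⁻ x, I x) ^ (p / p₁) * (κ * ∫⁻ x, J x) ^ (p / p₂)) := by
        rw [ENNReal.mul_rpow_of_nonneg _ _ (by positivity),
          ENNReal.mul_rpow_of_nonneg _ _ (by positivity)]
        nth_rw 1 [← ENNReal.rpow_one κ, ← hexp, ENNReal.rpow_add _ _ hκ0 hκt]
        ring

/-- Every admissible constant for `m` is admissible for `m ∘ (A × A)`: the dilated estimates of
`lintegral_tker_le` pass to the limit `ε → 0` by Fatou's lemma, and the product of the two
Gaussians is normalized in `L^p`. -/
lemma eLpNorm_rBm_comp_le (h1 : 0 < p₁) (h2 : 0 < p₂) (hp : 0 < p)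
    (hrel : 1/p₁ + 1/p₂ = 1/p)
    (hmc : Continuous fun z : ((Fin n → ℝ) × (Fin n → ℝ)) => m z.1 z.2)
    (hmB : ∀ ξ η, ‖m ξ η‖ ≤ Cm) (hCt : C ≠ ⊤)
    (hC : ∀ f g : (Fin n → ℝ) → ℂ, rSL1 f → rSL1 g →
      eLpNorm (rBm m f g) (ENNReal.ofReal p) volume ≤
        C * eLpNorm f (ENNReal.ofReal p₁) volume * eLpNorm g (ENNReal.ofReal p₂) volume)
    (hf : rSL1 f) (hg : rSL1 g) :
    eLpNorm (rBm (fun ξ η => m (A ξ) (A η)) f g) (ENNReal.ofReal p) volume ≤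
      C * eLpNorm f (ENNReal.ofReal p₁) volume * eLpNorm g (ENNReal.ofReal p₂) volume := by
  have hc₁ : 0 < Real.pi / p₁ := by positivity
  have hc₂ : 0 < Real.pi / p₂ := by positivity
  have hT := continuous_tker A hmc hmB hf.2 hg.2 (integrable_rft_gau (ι := Fin n) hc₁)
    (integrable_rft_gau (ι := Fin n) hc₂)
  set H : ℝ → (Fin d → ℝ) → (Fin n → ℝ) → ℂ := fun ε w z =>
    tker A m (rft f) (rft g) (rft (gau (Real.pi / p₁))) (rft (gau (Real.pi / p₂))) ε w z with hH
  set R := C * eLpNorm f (ENNReal.ofReal p₁) volume * eLpNorm g (ENNReal.ofReal p₂) volume with hR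
  have hHm : ∀ ε, Measurable fun t : (Fin d → ℝ) × (Fin n → ℝ) => ‖H ε t.1 t.2‖ₑ ^ p :=
    fun ε => ((hT.comp (by fun_prop : Continuous fun t : (Fin d → ℝ) × (Fin n → ℝ) =>
        (ε, t.1, t.2))).measurable.enorm.pow_const p)
  have hlim : ∀ t : (Fin d → ℝ) × (Fin n → ℝ),
      Tendsto (fun ε => ‖H ε t.1 t.2‖ₑ ^ p) (𝓝[>] 0) (𝓝 (‖H 0 t.1 t.2‖ₑ ^ p)) := fun t => by
    have h3 : Continuous fun ε => ‖H ε t.1 t.2‖ₑ ^ p :=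
      ENNReal.continuous_rpow_const.comp
        (hT.comp (by fun_prop : Continuous fun ε : ℝ => (ε, t.1, t.2))).enorm
    exact (h3.tendsto 0).mono_left nhdsWithin_le_nhds
  have hbound : ∫⁻ t : (Fin d → ℝ) × (Fin n → ℝ), ‖H 0 t.1 t.2‖ₑ ^ p ≤ R ^ p := by
    calc ∫⁻ t : (Fin d → ℝ) × (Fin n → ℝ), ‖H 0 t.1 t.2‖ₑ ^ p
        = ∫⁻ t : (Fin d → ℝ) × (Fin n → ℝ),
            liminf (fun ε => ‖H ε t.1 t.2‖ₑ ^ p) (𝓝[>] 0) :=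
          lintegral_congr fun t => (hlim t).liminf_eq.symm
      _ ≤ liminf (fun ε => ∫⁻ t : (Fin d → ℝ) × (Fin n → ℝ), ‖H ε t.1 t.2‖ₑ ^ p) (𝓝[>] 0) :=
          lintegral_liminf_le hHm
      _ ≤ R ^ p := by
          refine liminf_le_of_frequently_le' (Eventually.frequently ?_)
          filter_upwards [self_mem_nhdsWithin] with ε hε
          rw [Measure.volume_eq_prod, lintegral_prod _ (hHm ε).aemeasurable]
          exact lintegral_tker_le A h1 h2 hp hrel hmc hmB hCt hC hf hg hε
  have hzero : ∀ w, ∫⁻ z, ‖H 0 w z‖ₑ ^ p =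
      ‖rBm (fun ξ η => m (A ξ) (A η)) f g w‖ₑ ^ p := fun w => by
    have hs : Real.pi / p₁ + Real.pi / p₂ = Real.pi / p := by
      rw [div_eq_mul_one_div, div_eq_mul_one_div _ p₂, ← mul_add, hrel, mul_one_div]
    simp_rw [hH, tker_zero A hmc hmB hf hg, rinv_rft_gau hc₁, rinv_rft_gau hc₂, gau_mul, hs,
      enorm_mul, ENNReal.mul_rpow_of_nonneg _ _ hp.le, enorm_gau_rpow hp]
    rw [lintegral_const_mul _ (by fun_prop), lintegral_gau_pi, mul_one]
  rw [Measure.volume_eq_prod, lintegral_prod _ (hHm 0).aemeasurable] at hbound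
  simp_rw [hzero] at hbound
  rw [eLpNorm_ofReal_eq _ hp]
  calc _ ≤ (R ^ p) ^ (1 / p) := ENNReal.rpow_le_rpow hbound (by positivity)
    _ = R := by rw [← ENNReal.rpow_mul, mul_one_div_cancel hp.ne', ENNReal.rpow_one]

end Estimate

theorem stmt13 (d n : ℕ)
    (p p₁ p₂ : ℝ) (h1 : 1 ≤ p₁) (h2 : 1 ≤ p₂) (hp : 0 < p)
    (hrel : 1/p₁ + 1/p₂ = 1/p)
    (m : (Fin n → ℝ) → (Fin n → ℝ) → ℂ)
    (hmc : Continuous fun z : ((Fin n → ℝ) × (Fin n → ℝ)) => m z.1 z.2)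
    (Cm : ℝ) (hmB : ∀ ξ η, ‖m ξ η‖ ≤ Cm)
    (hm : rBMnorm (Fin n) p₁ p₂ p m ≠ ⊤)
    (A : (Fin d → ℝ) →ₗ[ℝ] (Fin n → ℝ)) :
    rBMnorm (Fin d) p₁ p₂ p (fun ξ η => m (A ξ) (A η)) ≤
      ENNReal.ofReal (cc p p₁ p₂) * rBMnorm (Fin n) p₁ p₂ p m := by
  have hp₁ : 0 < p₁ := by linarith
  have hp₂ : 0 < p₂ := by linarith
  calc rBMnorm (Fin d) p₁ p₂ p (fun ξ η => m (A ξ) (A η)) ≤ rBMnorm (Fin n) p₁ p₂ p m := by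
        refine le_sInf fun C hC => ?_
        rcases eq_or_ne C ⊤ with rfl | hCt
        · exact le_top
        · exact sInf_le fun f g hf hg =>
            eLpNorm_rBm_comp_le A hp₁ hp₂ hp hrel hmc hmB hCt hC hf hg
    _ ≤ ENNReal.ofReal (cc p p₁ p₂) * rBMnorm (Fin n) p₁ p₂ p m :=
        le_mul_of_one_le_left zero_le (ENNReal.one_le_ofReal.2 (one_le_cc h1 h2 hp))
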